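/- Let F be a field, n a natural number, and P a zero–nonzero pattern on n×n positions. Then the maximum of rank A, taken over all n×n matrices A over F supported on P (A i j ≠ 0 only if P i j), equals the matching number of P, i.e., the largest k for which there exist a set s of row indices with |s| = k and a function σ injective on s with P i (σ i) for all i ∈ s. -/

import Mathlib

/-- Rank is at most some matching size (Hall). -/
theorem exists_matching_of_supported {F : Type*} [Field F] {n : ℕ}
    (P : Fin n → Fin n → Prop) (A : Matrix (Fin n) (Fin n) F)
    (hA : ∀ i j, A i j ≠ 0 → P i j) :
    ∃ (s : Finset (Fin n)) (σ : Fin n → Fin n),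
      s.card = A.rank ∧ Set.InjOn σ ↑s ∧ ∀ i ∈ s, P i (σ i) := by
  classical
  obtain ⟨κ, a, ha, hspan, hli⟩ := exists_linearIndependent' F A.row
  have : Finite κ := Finite.of_injective a ha
  cases nonempty_fintype κ
  have hcard : Fintype.card κ = A.rank := by
    rw [A.rank_eq_finrank_span_row, ← hspan, linearIndependent_iff_card_eq_finrank_span.mp hli,
      Set.finrank]
  obtain ⟨f, hf, hft⟩ := (Finset.all_card_le_biUnion_card_iff_exists_injective
    (fun k : κ => Finset.univ.filter (fun j => A (a k) j ≠ 0))).mp (by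
      intro T
      let M : Matrix T (Fin n) F := A.submatrix (fun k : T => a k) id
      have hM : LinearIndependent F M.row :=
        hli.comp (fun k : T => (k : κ)) Subtype.val_injective
      have h1 := hM.rank_matrix
      rw [Fintype.card_coe] at h1
      rw [← h1, ← Matrix.rank_transpose]
      apply Matrix.rank_le_card_of_support_subset
      intro j hj
      obtain ⟨k, hk⟩ := Function.ne_iff.mp (Function.mem_support.mp hj)
      simp only [Finset.coe_biUnion, Set.mem_iUnion, Finset.mem_coe, Finset.mem_filter]
      exact ⟨k, k.2, Finset.mem_univ _, hk⟩)
  refine ⟨Finset.univ.image a, Function.extend a f id, ?_, ?_, ?_⟩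
  · rw [Finset.card_image_of_injective _ ha, Finset.card_univ, hcard]
  · intro x hx y hy hxy
    simp only [Finset.coe_image, Finset.coe_univ, Set.image_univ, Set.mem_range] at hx hy
    obtain ⟨k, rfl⟩ := hx
    obtain ⟨l, rfl⟩ := hy
    rw [ha.extend_apply, ha.extend_apply] at hxy
    rw [hf hxy]
  · intro x hx
    obtain ⟨k, -, rfl⟩ := Finset.mem_image.mp hx
    rw [ha.extend_apply]
    exact hA _ _ (Finset.mem_filter.mp (hft k)).2

/-- A matching yields a supported matrix of at least that rank. -/
theorem exists_supported_of_matching {F : Type*} [Field F] {n : ℕ}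
    (P : Fin n → Fin n → Prop) (s : Finset (Fin n)) (σ : Fin n → Fin n)
    (hσ : Set.InjOn σ ↑s) (hP : ∀ i ∈ s, P i (σ i)) :
    ∃ A : Matrix (Fin n) (Fin n) F, (∀ i j, A i j ≠ 0 → P i j) ∧ s.card ≤ A.rank := by
  classical
  let A : Matrix (Fin n) (Fin n) F := fun i j => if i ∈ s ∧ j = σ i then 1 else 0
  refine ⟨A, ?_, ?_⟩
  · intro i j h
    by_cases hc : i ∈ s ∧ j = σ i
    · obtain ⟨hi, rfl⟩ := hc
      exact hP i hi
    · exact absurd (if_neg hc) h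
  · have h1 : A.submatrix (fun k : s => (k : Fin n)) (fun k : s => σ k) = 1 := by
      ext k l
      have hkl : σ l = σ k ↔ k = l :=
        ⟨fun h => Subtype.ext (hσ l.2 k.2 h).symm, fun h => by rw [h]⟩
      rw [Matrix.submatrix_apply, Matrix.one_apply]
      change (if (k : Fin n) ∈ s ∧ σ l = σ k then (1 : F) else 0) = _
      simp [hkl]
    have h2 := A.rank_submatrix_le (fun k : s => (k : Fin n)) (fun k : s => σ k)
    rwa [h1, Matrix.rank_one, Fintype.card_coe] at h2

/-- Structural rank theorem: the maximum rank over all `n × n` matrices over a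
field `F` supported on a zero–nonzero pattern `P` equals the matching number
(term rank) of `P`. -/
theorem max_rank_supported_eq_matching_number {F : Type*} [Field F] {n : ℕ}
    (P : Fin n → Fin n → Prop) :
    sSup {r : ℕ | ∃ A : Matrix (Fin n) (Fin n) F,
        (∀ i j, A i j ≠ 0 → P i j) ∧ A.rank = r}
      = sSup {k : ℕ | ∃ (s : Finset (Fin n)) (σ : Fin n → Fin n),
          s.card = k ∧ Set.InjOn σ ↑s ∧ ∀ i ∈ s, P i (σ i)} := by
  apply le_antisymm
  · apply csSup_le'
    rintro r ⟨A, hA, rfl⟩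
    refine le_csSup ⟨n, ?_⟩ (exists_matching_of_supported P A hA)
    rintro k ⟨s, σ, rfl, -⟩
    simpa using s.card_le_univ
  · apply csSup_le'
    rintro k ⟨s, σ, rfl, hσ, hP⟩
    obtain ⟨A, hA, hr⟩ := exists_supported_of_matching (F := F) P s σ hσ hP
    refine hr.trans (le_csSup ⟨n, ?_⟩ ⟨A, hA, rfl⟩)
    rintro r ⟨B, -, rfl⟩
    exact B.rank_le_height
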